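/- arXiv:2008.00270 — 2 statements merged into one kernel-verified Lean document; each statement's English description precedes it below -/
import Mathlib

section
/- Case 4 of the meeting-point analysis: in a rooted tree, assume dist(v,q) ≤ dist(u,q), q is not an ancestor of u, u is not an ancestor of q, and the lowest common ancestor of v and q is not an ancestor of u. Then the median of u, v, q equals the lowest common ancestor of v and q. -/
/-- `m` lies on the path from `a` to `b` in the graph `G`. -/
def onPath {V : Type*} (G : SimpleGraph V) (a m b : V) : Prop :=
  G.dist a m + G.dist m b = G.dist a b

/-- `m` is a median of the vertices `u`, `v`, `w`: it lies on the path from `u` to `v`,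
on the path from `u` to `w`, and on the path from `v` to `w`. -/
def isMedian {V : Type*} (G : SimpleGraph V) (m u v w : V) : Prop :=
  onPath G u m v ∧ onPath G u m w ∧ onPath G v m w

/-- `u` is an ancestor of `v` with respect to the root `r`:
`u` lies on the path from `r` to `v`. -/
def isAncestor {V : Type*} (G : SimpleGraph V) (r u v : V) : Prop :=
  onPath G r u v

/-- `l` is a lowest common ancestor of `u` and `v` with respect to the root `r`. -/
def isLCA {V : Type*} (G : SimpleGraph V) (r l u v : V) : Prop :=
  isAncestor G r l u ∧ isAncestor G r l v ∧
    ∀ a : V, isAncestor G r a u → isAncestor G r a v → isAncestor G r a l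

lemma aux_len {V : Type*} {G : SimpleGraph V} (hG : G.IsTree) {a b : V} (p : G.Walk a b)
    (hp : p.IsPath) : p.length = G.dist a b := by
  obtain ⟨w, hw, hl⟩ := hG.1.exists_path_of_dist a b
  rw [← hl, (hG.existsUnique_path a b).unique hp hw]

lemma aux_mem {V : Type*} {G : SimpleGraph V} (hG : G.IsTree) {a b x : V} (p : G.Walk a b)
    (hp : p.length = G.dist a b) (hx : x ∈ p.support) : onPath G a x b := by
  classical
  have h := congrArg SimpleGraph.Walk.length (p.take_spec hx)
  rw [SimpleGraph.Walk.length_append] at h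
  have h1 := SimpleGraph.dist_le (p.takeUntil x hx)
  have h2 := SimpleGraph.dist_le (p.dropUntil x hx)
  have h3 := hG.1.dist_triangle (u := a) (v := x) (w := b)
  unfold onPath
  omega

lemma aux_split {V : Type*} {G : SimpleGraph V} (hG : G.IsTree) {a b m : V} (x : V)
    (h : onPath G a m b) : onPath G a m x ∨ onPath G x m b := by
  classical
  obtain ⟨p, hp⟩ := hG.1.exists_walk_length_eq_dist a m
  obtain ⟨q, hq⟩ := hG.1.exists_walk_length_eq_dist m b
  obtain ⟨s, hs⟩ := hG.1.exists_walk_length_eq_dist a x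
  obtain ⟨t, ht⟩ := hG.1.exists_walk_length_eq_dist x b
  have hpq : (p.append q).IsPath := by
    apply SimpleGraph.Walk.isPath_of_length_eq_dist
    rw [SimpleGraph.Walk.length_append, hp, hq]
    exact h
  have he := (hG.existsUnique_path a b).unique hpq (s.append t).bypass_isPath
  have hm : m ∈ (p.append q).support := by simp
  rw [he] at hm
  have hm' := (s.append t).support_bypass_subset_support hm
  rw [SimpleGraph.Walk.mem_support_append_iff] at hm'
  exact hm'.imp (aux_mem hG s hs) (aux_mem hG t ht)

lemma aux_join {V : Type*} {G : SimpleGraph V} (hG : G.IsTree) {a b m : V}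
    (h : ∀ x, onPath G a x m → onPath G m x b → x = m) : onPath G a m b := by
  obtain ⟨p, hp⟩ := hG.1.exists_walk_length_eq_dist a m
  obtain ⟨q, hq⟩ := hG.1.exists_walk_length_eq_dist m b
  have hpq : (p.append q).IsPath := by
    have h1 := (p.isPath_of_length_eq_dist hp).support_nodup
    have h2 := (q.isPath_of_length_eq_dist hq).support_nodup
    rw [SimpleGraph.Walk.isPath_def, SimpleGraph.Walk.support_append, List.nodup_append']
    refine ⟨h1, h2.tail, fun x hx hx' => ?_⟩
    have := h x (aux_mem hG p hp hx) (aux_mem hG q hq (List.mem_of_mem_tail hx'))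
    subst this
    rw [SimpleGraph.Walk.support_eq_cons, List.nodup_cons] at h2
    exact h2.1 hx'
  have := aux_len hG _ hpq
  rw [SimpleGraph.Walk.length_append, hp, hq] at this
  exact this

/-- Case 4: if `dist(v,q) ≤ dist(u,q)`, `q` is not an ancestor of `u`, `u` is
not an ancestor of `q`, and the LCA of `v` and `q` is not an ancestor of `u`,
then the median of `u`, `v`, `q` equals the LCA of `v` and `q`. -/
theorem median_case4 {V : Type*} [Fintype V] (G : SimpleGraph V)
    (hG : G.IsTree) (r u v q : V)
    (hd : G.dist v q ≤ G.dist u q)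
    (hqu : ¬ isAncestor G r q u) (huq : ¬ isAncestor G r u q)
    (l : V) (hl : isLCA G r l v q) (hlu : ¬ isAncestor G r l u) :
    ∀ m : V, isMedian G m u v q → m = l := by
  intro m hm
  obtain ⟨hv, hq, hmax⟩ := hl
  have huv : onPath G u l v := (aux_split hG u hv).resolve_left hlu
  have huq' : onPath G u l q := (aux_split hG u hq).resolve_left hlu
  have hvq : onPath G v l q := by
    apply aux_join hG
    intro x h1 h2
    have t1 := hG.1.dist_triangle (u := r) (v := l) (w := x)
    have t2 := hG.1.dist_triangle (u := r) (v := x) (w := v)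
    have t3 := hG.1.dist_triangle (u := r) (v := x) (w := q)
    have c1 := G.dist_comm (u := v) (v := x)
    have c2 := G.dist_comm (u := x) (v := l)
    have c3 := G.dist_comm (u := v) (v := l)
    have h3 := hmax x
    unfold isAncestor onPath at *
    have h4 := h3 (by omega) (by omega)
    exact hG.1.dist_eq_zero_iff.1 (by omega)
  obtain ⟨m1, m2, m3⟩ := hm
  have s1 := aux_split hG m huv
  have s2 := aux_split hG m huq'
  have s3 := aux_split hG m hvq
  have c1 := G.dist_comm (u := u) (v := m)
  have c2 := G.dist_comm (u := v) (v := m)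
  have c3 := G.dist_comm (u := q) (v := m)
  have c4 := G.dist_comm (u := u) (v := l)
  have c5 := G.dist_comm (u := v) (v := l)
  have c6 := G.dist_comm (u := q) (v := l)
  have c7 := G.dist_comm (u := m) (v := l)
  apply hG.1.dist_eq_zero_iff.1
  unfold onPath at *
  omega
end

section
/- Case 5 of the meeting-point analysis: in a rooted tree, assume dist(v,q) ≤ dist(u,q), q is not an ancestor of u, u is not an ancestor of q, the lowest common ancestor of v and q is an ancestor of u, and the lowest common ancestor of u and v is not an ancestor of q. Then the median of u, v, q equals the lowest common ancestor of u and v. -/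
/-- In a tree, a vertex on the path from `a` to `b` lies on the path from `a` to `c`
or on the path from `c` to `b`. -/
theorem onPath_split {V : Type*} (G : SimpleGraph V) (hG : G.IsTree) {a x b : V}
    (h : onPath G a x b) (c : V) : onPath G a x c ∨ onPath G c x b := by
  classical
  have hc := hG.connected
  have key : ∀ {s t y : V} (p : G.Walk s t), p.length = G.dist s t → y ∈ p.support →
      onPath G s y t := by
    intro s t y p hp hy
    have h1 := congrArg SimpleGraph.Walk.length (p.take_spec hy)
    rw [SimpleGraph.Walk.length_append] at h1
    have h2 := SimpleGraph.dist_le (p.takeUntil y hy)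
    have h3 := SimpleGraph.dist_le (p.dropUntil y hy)
    have h4 := hc.dist_triangle (u := s) (v := y) (w := t)
    unfold onPath
    omega
  obtain ⟨p1, hp1⟩ := hc.exists_walk_length_eq_dist a x
  obtain ⟨p2, hp2⟩ := hc.exists_walk_length_eq_dist x b
  obtain ⟨q1, hq1⟩ := hc.exists_walk_length_eq_dist a c
  obtain ⟨q2, hq2⟩ := hc.exists_walk_length_eq_dist c b
  have hp : (p1.append p2).IsPath := by
    apply SimpleGraph.Walk.isPath_of_length_eq_dist
    rw [SimpleGraph.Walk.length_append, hp1, hp2]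
    exact h
  have hq : (q1.append q2).bypass.IsPath := SimpleGraph.Walk.bypass_isPath _
  have e : (q1.append q2).bypass = p1.append p2 :=
    (hG.existsUnique_path a b).unique hq hp
  have hx : x ∈ (q1.append q2).support := by
    apply SimpleGraph.Walk.support_bypass_subset
    rw [e, SimpleGraph.Walk.mem_support_append_iff]
    exact Or.inl p1.end_mem_support
  rw [SimpleGraph.Walk.mem_support_append_iff] at hx
  exact hx.imp (key q1 hq1) (key q2 hq2)

/-- Case 5: if `dist(v,q) ≤ dist(u,q)`, `q` is not an ancestor of `u`, `u` is
not an ancestor of `q`, the LCA of `v` and `q` is an ancestor of `u`, and the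
LCA of `u` and `v` is not an ancestor of `q`, then the median of `u`, `v`, `q`
equals the LCA of `u` and `v`. -/
theorem median_case5 {V : Type*} [Fintype V] (G : SimpleGraph V)
    (hG : G.IsTree) (r u v q : V)
    (hd : G.dist v q ≤ G.dist u q)
    (hqu : ¬ isAncestor G r q u) (huq : ¬ isAncestor G r u q)
    (l1 : V) (hl1 : isLCA G r l1 v q) (hl1u : isAncestor G r l1 u)
    (l2 : V) (hl2 : isLCA G r l2 u v) (hl2q : ¬ isAncestor G r l2 q) :
    ∀ m : V, isMedian G m u v q → m = l2 := by
  rintro m ⟨muv, muq, mvq⟩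
  obtain ⟨l2u, l2v, l2max⟩ := hl2
  have hc := hG.connected
  have comm : ∀ {a x b : V}, onPath G a x b → onPath G b x a := by
    intro a x b h
    unfold onPath at *
    rw [G.dist_comm (u := b) (v := x), G.dist_comm (u := x) (v := a),
      G.dist_comm (u := b) (v := a)]
    omega
  have trans : ∀ {a b c : V}, isAncestor G r a b → isAncestor G r b c →
      isAncestor G r a c := by
    intro a b c h1 h2
    unfold isAncestor onPath at *
    have h3 := hc.dist_triangle (u := a) (v := b) (w := c)
    have h4 := hc.dist_triangle (u := r) (v := a) (w := c)
    omega
  -- ancestors of a common vertex are comparable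
  have chain : ∀ {a b c : V}, isAncestor G r a c → isAncestor G r b c →
      isAncestor G r a b ∨ isAncestor G r b a := by
    intro a b c h1 h2
    refine (onPath_split G hG h1 b).imp id ?_
    intro h3
    have h4 := hc.dist_triangle (u := r) (v := b) (w := a)
    unfold isAncestor onPath at *
    omega
  have mu : isAncestor G r m u := by
    by_contra hn
    have hv : isAncestor G r m v := (onPath_split G hG muv r).resolve_left (fun h => hn (comm h))
    have hq : isAncestor G r m q := (onPath_split G hG muq r).resolve_left (fun h => hn (comm h))
    rcases chain l2v hv with h | h
    · exact hl2q (trans h hq)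
    · exact hn (trans h l2u)
  have mv : isAncestor G r m v := by
    by_contra hn
    have hq : isAncestor G r m q := (onPath_split G hG mvq r).resolve_left (fun h => hn (comm h))
    rcases chain l2u mu with h | h
    · exact hl2q (trans h hq)
    · exact hn (trans h l2v)
  have ml := l2max m mu mv
  apply hc.dist_eq_zero_iff.mp
  have t := hc.dist_triangle (u := u) (v := l2) (w := v)
  have c1 := G.dist_comm (u := u) (v := l2)
  have c2 := G.dist_comm (u := u) (v := m)
  unfold isAncestor onPath at *
  omega
end
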